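/- arXiv:1202.1869 — 3 statements merged into one kernel-verified Lean document; each statement's English description precedes it below -/
import Mathlib

section
/- Let τ be a complex number with Im τ > 0, let q = e^{2πiτ}, let m, n be positive integers, and let y₁, y₂, …, y_n be complex numbers with y₁ + y₂ + ⋯ + y_n = 0. Then for every complex number z, ∑_{k=0}^{mn-1} q^{k²/2} e^{2kiz} ∏_{j=1}^{n} θ₃(mz + y_j + kmπτ | m²nτ) = F_{m,n}(y₁, …, y_n | τ) · θ₃(z | τ), where F_{m,n}(y₁, …, y_n | τ) = ((−iτ)^{(1−n)/2} / (m²n)^{n/2}) · e^{(y₁²+⋯+y_n²)/(m²nπτ i)} · G_{m,n}(y₁/(m²nτ), …, y_n/(m²nτ) | −1/(m²nτ)). -/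
open scoped BigOperators

/-- The Jacobi theta function θ₃(z|τ) = ∑_{n∈ℤ} q^{n²/2} e^{2niz}, where q = e^{2πiτ}. -/
noncomputable def θ₃ (z τ : ℂ) : ℂ :=
  ∑' k : ℤ, Complex.exp (2 * Real.pi * Complex.I * τ * ((k : ℂ) ^ 2 / 2)) *
    Complex.exp (2 * (k : ℂ) * Complex.I * z)

/-- G_{m,n}(y₁,…,y_n|τ) = mn · ∑_{r₁+⋯+r_n=0} q^{(r₁²+⋯+r_n²)/2} e^{2i(r₁y₁+⋯+r_ny_n)}. -/
noncomputable def G (m n : ℕ) (y : Fin n → ℂ) (τ : ℂ) : ℂ :=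
  (m : ℂ) * (n : ℂ) * ∑' r : {r : Fin n → ℤ // ∑ j, r j = 0},
    Complex.exp (2 * Real.pi * Complex.I * τ * ((∑ j, ((r.1 j : ℂ)) ^ 2) / 2)) *
    Complex.exp (2 * Complex.I * ∑ j, (r.1 j : ℂ) * y j)

open Complex in
/-- The summand of the series defining `θ₃`. -/
noncomputable def thetaTerm (z τ : ℂ) (k : ℤ) : ℂ :=
  exp (2 * Real.pi * I * τ * ((k : ℂ) ^ 2 / 2)) * exp (2 * (k : ℂ) * I * z)

lemma thetaTerm_eq_jacobiTheta₂_term (z τ : ℂ) (k : ℤ) :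
    thetaTerm z τ k = jacobiTheta₂_term k (z / Real.pi) τ := by
  have hpi : (Real.pi : ℂ) ≠ 0 := by exact_mod_cast Real.pi_ne_zero
  rw [thetaTerm, jacobiTheta₂_term, ← Complex.exp_add]
  congr 1
  field_simp
  ring

lemma θ₃_eq_jacobiTheta₂ (z τ : ℂ) : θ₃ z τ = jacobiTheta₂ (z / Real.pi) τ :=
  tsum_congr fun k => thetaTerm_eq_jacobiTheta₂_term z τ k

lemma summable_norm_thetaTerm (z : ℂ) {τ : ℂ} (hτ : 0 < τ.im) :
    Summable fun k => ‖thetaTerm z τ k‖ := by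
  simp_rw [thetaTerm_eq_jacobiTheta₂_term]
  exact ((summable_jacobiTheta₂_term_iff _ _).2 hτ).norm

lemma thetaTerm_add_left (z w τ : ℂ) (k : ℤ) :
    thetaTerm (z + w) τ k = thetaTerm z τ k * Complex.exp (2 * (k : ℂ) * Complex.I * w) := by
  rw [thetaTerm, thetaTerm, mul_add, Complex.exp_add, ← mul_assoc]

/-- The Jacobi imaginary transformation of `θ₃`. -/
lemma θ₃_functional_equation (z τ : ℂ) :
    θ₃ z τ = 1 / (-Complex.I * τ) ^ (1 / 2 : ℂ) *
      Complex.exp (z ^ 2 / (Real.pi * τ * Complex.I)) * θ₃ (z / τ) (-1 / τ) := by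
  have hpi : (Real.pi : ℂ) ≠ 0 := by exact_mod_cast Real.pi_ne_zero
  rw [θ₃_eq_jacobiTheta₂, θ₃_eq_jacobiTheta₂, jacobiTheta₂_functional_equation, div_right_comm]
  congr 3
  rcases eq_or_ne τ 0 with rfl | hτ
  · simp
  field_simp
  rw [Complex.I_sq]
  ring

lemma neg_one_div_im_pos {τ : ℂ} (hτ : 0 < τ.im) : 0 < (-1 / τ).im := by
  have h0 : τ ≠ 0 := by rintro rfl; simp at hτ
  rw [neg_div, Complex.neg_im, one_div, Complex.inv_im, neg_div, neg_neg]
  exact div_pos hτ (Complex.normSq_pos.2 h0)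

/-- A finite product of absolutely convergent series is an absolutely convergent series over
tuples of indices. -/
lemma summable_norm_prod_and_prod_tsum {R ι : Type*} [NormedCommRing R]
    [CompleteSpace R] :
    ∀ {n : ℕ} (f : Fin n → ι → R), (∀ j, Summable fun k => ‖f j k‖) →
      (Summable fun r : Fin n → ι => ‖∏ j, f j (r j)‖) ∧
        ∏ j, ∑' k, f j k = ∑' r : Fin n → ι, ∏ j, f j (r j)
  | 0, f, _ => ⟨(hasSum_fintype _).summable, by simp⟩
  | n + 1, f, hf => by
    obtain ⟨hs, hp⟩ := summable_norm_prod_and_prod_tsum (fun j => f j.succ) fun j => hf j.succ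
    have h := (hf 0).mul_norm hs
    rw [← (Fin.consEquiv fun _ => ι).summable_iff, Fin.prod_univ_succ, hp,
      tsum_mul_tsum_of_summable_norm (hf 0) hs, ← (Fin.consEquiv fun _ => ι).tsum_eq]
    simpa [Function.comp_def, Fin.consEquiv, Fin.prod_univ_succ] using h

lemma sum_range_exp_two_pi_mul_div {N : ℕ} (hN : 0 < N) (R : ℤ) :
    ∑ k ∈ Finset.range N, Complex.exp (2 * Real.pi * Complex.I * (R / N)) ^ k =
      if (N : ℤ) ∣ R then (N : ℂ) else 0 := by
  have hN' : (N : ℂ) ≠ 0 := by exact_mod_cast hN.ne'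
  have key : Complex.exp (2 * Real.pi * Complex.I * (R / N)) = 1 ↔ (N : ℤ) ∣ R := by
    rw [Complex.exp_eq_one_iff]
    refine exists_congr fun u => ?_
    rw [mul_comm, mul_left_inj' Complex.two_pi_I_ne_zero, div_eq_iff hN', mul_comm (u : ℂ)]
    exact_mod_cast Iff.rfl
  split_ifs with h
  · simp [key.2 h]
  · rw [geom_sum_eq (mt key.1 h), ← Complex.exp_nat_mul, mul_left_comm, mul_div_cancel₀ _ hN',
      mul_comm, Complex.exp_int_mul_two_pi_mul_I, sub_self, zero_div]

/-- Tuples of integers whose sum is divisible by `m * n` are parametrised by the quotient `u` and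
by the zero-sum tuple left after subtracting `m * u` from each entry. -/
lemma tsum_ite_dvd_sum {m n : ℕ} (hn : 0 < n) (hm : 0 < m) (h : (Fin n → ℤ) → ℂ) :
    ∑' r : Fin n → ℤ, (if ((m * n : ℕ) : ℤ) ∣ ∑ j, r j then h r else 0) =
      ∑' p : ℤ × {r : Fin n → ℤ // ∑ j, r j = 0}, h (fun j => m * p.1 + p.2.1 j) := by
  have hsum (p : ℤ × {r : Fin n → ℤ // ∑ j, r j = 0}) :
      ∑ j, ((m : ℤ) * p.1 + p.2.1 j) = ((m * n : ℕ) : ℤ) * p.1 := by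
    simp only [Finset.sum_add_distrib, p.2.2, Finset.sum_const, Finset.card_univ, Fintype.card_fin,
      nsmul_eq_mul]
    push_cast
    ring
  have hN : ((m * n : ℕ) : ℤ) ≠ 0 := by positivity
  have hinj : Function.Injective
      fun (p : ℤ × {r : Fin n → ℤ // ∑ j, r j = 0}) (j : Fin n) => (m : ℤ) * p.1 + p.2.1 j := by
    intro p p' hpp
    have h1 : p.1 = p'.1 := by
      have := congrArg (fun r : Fin n → ℤ => ∑ j, r j) hpp
      simp only [hsum] at this
      exact mul_left_cancel₀ hN this
    refine Prod.ext h1 (Subtype.ext (funext fun j => ?_))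
    have := congrFun hpp j
    simpa [h1] using this
  rw [← hinj.tsum_eq]
  · refine tsum_congr fun p => ?_
    rw [hsum, if_pos (dvd_mul_right _ _)]
  · intro r hr
    have hd : ((m * n : ℕ) : ℤ) ∣ ∑ j, r j := by
      by_contra hd
      exact hr (if_neg hd)
    obtain ⟨u, hu⟩ := hd
    refine ⟨(u, ⟨fun j => r j - m * u, ?_⟩), ?_⟩
    · rw [Finset.sum_sub_distrib, hu]
      simp
      ring
    · ext j
      simp

/-- The terms of `G m n y τ / (m * n)` are products of terms of `θ₃`. -/
lemma prod_thetaTerm {n : ℕ} (y : Fin n → ℂ) (τ : ℂ) (r : Fin n → ℤ) :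
    ∏ j, thetaTerm (y j) τ (r j) =
      Complex.exp (2 * Real.pi * Complex.I * τ * ((∑ j, (r j : ℂ) ^ 2) / 2)) *
        Complex.exp (2 * Complex.I * ∑ j, (r j : ℂ) * y j) := by
  simp only [thetaTerm]
  rw [Finset.prod_mul_distrib, ← Complex.exp_sum, ← Complex.exp_sum, Finset.sum_div,
    Finset.mul_sum, Finset.mul_sum]
  congr 2
  exact Finset.sum_congr rfl fun j _ => by ring

/-- Shifting a zero-sum tuple by the constant `m * u` splits off a term of `θ₃ (z / τ) (-1 / τ)`. -/
lemma prod_thetaTerm_shift {m n : ℕ} (hm : 0 < m) (hn : 0 < n) {τ : ℂ} (hτ : τ ≠ 0)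
    {y : Fin n → ℂ} (hy : ∑ j, y j = 0) (z : ℂ) (u : ℤ) {r : Fin n → ℤ} (hr : ∑ j, r j = 0) :
    ∏ j, thetaTerm ((m * z + y j) / ((m : ℂ) ^ 2 * n * τ)) (-1 / ((m : ℂ) ^ 2 * n * τ))
        (m * u + r j) =
      thetaTerm (z / τ) (-1 / τ) u *
        ∏ j, thetaTerm (y j / ((m : ℂ) ^ 2 * n * τ)) (-1 / ((m : ℂ) ^ 2 * n * τ)) (r j) := by
  have hm' : (m : ℂ) ≠ 0 := by exact_mod_cast hm.ne'
  have hn' : (n : ℂ) ≠ 0 := by exact_mod_cast hn.ne'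
  have hr' : ∑ j, (r j : ℂ) = 0 := by exact_mod_cast congrArg (Int.cast : ℤ → ℂ) hr
  have h1 : ∑ j, ((m * u + r j : ℤ) : ℂ) ^ 2 = n * (m * u) ^ 2 + ∑ j, (r j : ℂ) ^ 2 := by
    push_cast
    simp only [add_sq, Finset.sum_add_distrib, ← Finset.mul_sum, hr']
    simp
  have h2 : ∑ j, ((m * u + r j : ℤ) : ℂ) * ((m * z + y j) / ((m : ℂ) ^ 2 * n * τ)) =
      u * z / τ + ∑ j, (r j : ℂ) * (y j / ((m : ℂ) ^ 2 * n * τ)) := by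
    push_cast
    simp only [add_mul, add_div, mul_add, Finset.sum_add_distrib, ← Finset.mul_sum,
      ← Finset.sum_mul, ← Finset.sum_div, hr', hy]
    simp only [Finset.sum_const, Finset.card_univ, Fintype.card_fin, nsmul_eq_mul]
    field_simp
    ring
  rw [prod_thetaTerm, prod_thetaTerm, h1, h2, thetaTerm, ← Complex.exp_add, ← Complex.exp_add,
    ← Complex.exp_add, ← Complex.exp_add]
  congr 1
  field_simp
  ring

/-- The circular sum of products of theta functions at the transformed argument `-1 / (m² n τ)`. -/
lemma sum_range_prod_θ₃_transformed {m n : ℕ} (hm : 0 < m) (hn : 0 < n) {τ : ℂ} (hτ : 0 < τ.im)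
    {y : Fin n → ℂ} (hy : ∑ j, y j = 0) (z : ℂ) :
    ∑ k ∈ Finset.range (m * n),
        ∏ j, θ₃ ((m * z + y j + k * m * Real.pi * τ) / ((m : ℂ) ^ 2 * n * τ))
          (-1 / ((m : ℂ) ^ 2 * n * τ)) =
      G m n (fun j => y j / ((m : ℂ) ^ 2 * n * τ)) (-1 / ((m : ℂ) ^ 2 * n * τ)) *
        θ₃ (z / τ) (-1 / τ) := by
  have hm' : (m : ℂ) ≠ 0 := by exact_mod_cast hm.ne'
  have hn' : (n : ℂ) ≠ 0 := by exact_mod_cast hn.ne'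
  have hτ0 : τ ≠ 0 := by rintro rfl; simp at hτ
  have hT : 0 < ((m : ℂ) ^ 2 * n * τ).im := by
    have : (m : ℂ) ^ 2 * n * τ = ((m ^ 2 * n : ℝ) : ℂ) * τ := by push_cast; rfl
    rw [this, Complex.im_ofReal_mul]
    positivity
  set S := -1 / ((m : ℂ) ^ 2 * n * τ) with hS
  have hSim : 0 < S.im := neg_one_div_im_pos hT
  have hprod (w : Fin n → ℂ) := summable_norm_prod_and_prod_tsum
    (fun j => thetaTerm (w j) S) fun j => summable_norm_thetaTerm (w j) hSim
  have hterm (k : ℕ) (r : Fin n → ℤ) :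
      ∏ j, thetaTerm ((m * z + y j + k * m * Real.pi * τ) / ((m : ℂ) ^ 2 * n * τ)) S (r j) =
        (∏ j, thetaTerm ((m * z + y j) / ((m : ℂ) ^ 2 * n * τ)) S (r j)) *
          Complex.exp (2 * Real.pi * Complex.I * ((∑ j, r j : ℤ) / (m * n : ℕ))) ^ k := by
    simp only [add_div _ (_ * (Real.pi : ℂ) * τ), thetaTerm_add_left]
    rw [Finset.prod_mul_distrib, ← Complex.exp_sum, ← Complex.exp_nat_mul]
    congr 2
    rw [← Finset.sum_mul, ← Finset.sum_mul, ← Finset.mul_sum]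
    push_cast
    field_simp
  calc _ = ∑ k ∈ Finset.range (m * n), ∑' r : Fin n → ℤ, ∏ j,
        thetaTerm ((m * z + y j + k * m * Real.pi * τ) / ((m : ℂ) ^ 2 * n * τ)) S (r j) :=
        Finset.sum_congr rfl fun k _ => (hprod _).2
    _ = ∑' r : Fin n → ℤ, ∑ k ∈ Finset.range (m * n), ∏ j,
        thetaTerm ((m * z + y j + k * m * Real.pi * τ) / ((m : ℂ) ^ 2 * n * τ)) S (r j) :=
        (Summable.tsum_finsetSum fun k _ => (hprod _).1.of_norm).symm
    _ = ∑' r : Fin n → ℤ, if ((m * n : ℕ) : ℤ) ∣ ∑ j, r j then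
          (∏ j, thetaTerm ((m * z + y j) / ((m : ℂ) ^ 2 * n * τ)) S (r j)) * (m * n : ℕ)
          else 0 := by
        refine tsum_congr fun r => ?_
        simp only [hterm]
        rw [← Finset.mul_sum, sum_range_exp_two_pi_mul_div (by positivity), mul_ite, mul_zero]
    _ = ∑' p : ℤ × {r : Fin n → ℤ // ∑ j, r j = 0}, thetaTerm (z / τ) (-1 / τ) p.1 *
          (∏ j, thetaTerm (y j / ((m : ℂ) ^ 2 * n * τ)) S (p.2.1 j)) * (m * n : ℕ) := by
        rw [tsum_ite_dvd_sum hn hm]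
        exact tsum_congr fun p => by rw [prod_thetaTerm_shift hm hn hτ0 hy z p.1 p.2.2]
    _ = _ := by
        rw [tsum_mul_right, ← tsum_mul_tsum_of_summable_norm
          (summable_norm_thetaTerm _ (neg_one_div_im_pos hτ)) ((hprod _).1.subtype _)]
        simp only [prod_thetaTerm]
        rw [G, θ₃]
        simp only [thetaTerm]
        push_cast
        ring

/-- The prefactors of the imaginary transformations of the `n` theta functions. -/
lemma cpow_prefactor {m n : ℕ} (hm : 0 < m) (hn : 0 < n) {τ : ℂ} (hτ : τ ≠ 0) :
    (1 / (-Complex.I * ((m : ℂ) ^ 2 * n * τ)) ^ (1 / 2 : ℂ)) ^ n =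
      (-Complex.I * τ) ^ ((1 - (n : ℂ)) / 2) / ((m : ℂ) ^ 2 * n) ^ ((n : ℂ) / 2) *
        (1 / (-Complex.I * τ) ^ (1 / 2 : ℂ)) := by
  have h0 : -Complex.I * τ ≠ 0 := by simp [hτ]
  have hc : (0 : ℝ) < m ^ 2 * n := by positivity
  have hcast : (m : ℂ) ^ 2 * n = ((m ^ 2 * n : ℝ) : ℂ) := by push_cast; rfl
  have hsplit : (-Complex.I * ((m : ℂ) ^ 2 * n * τ)) ^ (1 / 2 : ℂ) =
      ((m : ℂ) ^ 2 * n) ^ (1 / 2 : ℂ) * (-Complex.I * τ) ^ (1 / 2 : ℂ) := by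
    rw [mul_left_comm, hcast, Complex.cpow_def_of_ne_zero (by simp [hτ, hm.ne', hn.ne']),
      Complex.log_ofReal_mul hc h0, add_mul, Complex.exp_add, Complex.cpow_def_of_ne_zero h0,
      Complex.ofReal_log hc.le, Complex.cpow_def_of_ne_zero (by exact_mod_cast hc.ne')]
  rw [hsplit, sub_div, Complex.cpow_sub _ _ h0, one_div, inv_pow, mul_pow, ← Complex.cpow_nat_mul,
    ← Complex.cpow_nat_mul, mul_one_div]
  field_simp

theorem dual_circular_summation (τ : ℂ) (hτ : 0 < τ.im) (m n : ℕ) (hm : 0 < m) (hn : 0 < n)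
    (y : Fin n → ℂ) (hy : ∑ j, y j = 0) (z : ℂ) :
    ∑ k ∈ Finset.range (m * n),
      Complex.exp (2 * Real.pi * Complex.I * τ * ((k : ℂ) ^ 2 / 2)) *
        Complex.exp (2 * (k : ℂ) * Complex.I * z) *
        ∏ j, θ₃ ((m : ℂ) * z + y j + (k : ℂ) * m * Real.pi * τ) ((m : ℂ) ^ 2 * n * τ)
    = ((-Complex.I * τ) ^ ((1 - (n : ℂ)) / 2) / ((m : ℂ) ^ 2 * n) ^ ((n : ℂ) / 2)) *
        Complex.exp ((∑ j, y j ^ 2) / ((m : ℂ) ^ 2 * n * Real.pi * τ * Complex.I)) *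
        G m n (fun j => y j / ((m : ℂ) ^ 2 * n * τ)) (-1 / ((m : ℂ) ^ 2 * n * τ)) *
        θ₃ z τ := by
  have hm' : (m : ℂ) ≠ 0 := by exact_mod_cast hm.ne'
  have hn' : (n : ℂ) ≠ 0 := by exact_mod_cast hn.ne'
  have hτ0 : τ ≠ 0 := by rintro rfl; simp at hτ
  have hpi : (Real.pi : ℂ) ≠ 0 := by exact_mod_cast Real.pi_ne_zero
  have hsq (k : ℕ) : ∑ j, ((m : ℂ) * z + y j + k * m * Real.pi * τ) ^ 2 =
      n * (m * (z + k * Real.pi * τ)) ^ 2 + ∑ j, y j ^ 2 := by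
    have (j : Fin n) : ((m : ℂ) * z + y j + k * m * Real.pi * τ) ^ 2 =
        (m * (z + k * Real.pi * τ)) ^ 2 + 2 * (m * (z + k * Real.pi * τ)) * y j + y j ^ 2 := by
      ring
    simp only [this, Finset.sum_add_distrib, ← Finset.mul_sum, hy]
    simp
  have hterm (k : ℕ) : Complex.exp (2 * Real.pi * Complex.I * τ * ((k : ℂ) ^ 2 / 2)) *
        Complex.exp (2 * (k : ℂ) * Complex.I * z) *
        ∏ j, θ₃ ((m : ℂ) * z + y j + (k : ℂ) * m * Real.pi * τ) ((m : ℂ) ^ 2 * n * τ) =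
      (1 / (-Complex.I * ((m : ℂ) ^ 2 * n * τ)) ^ (1 / 2 : ℂ)) ^ n *
        (Complex.exp ((∑ j, y j ^ 2) / ((m : ℂ) ^ 2 * n * Real.pi * τ * Complex.I)) *
          Complex.exp (z ^ 2 / (Real.pi * τ * Complex.I))) *
        ∏ j, θ₃ ((m * z + y j + k * m * Real.pi * τ) / ((m : ℂ) ^ 2 * n * τ))
          (-1 / ((m : ℂ) ^ 2 * n * τ)) := by
    simp only [θ₃_functional_equation _ ((m : ℂ) ^ 2 * n * τ), Finset.prod_mul_distrib,
      Finset.prod_const, Finset.card_univ, Fintype.card_fin]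
    rw [← Complex.exp_sum, ← Finset.sum_div, hsq, ← mul_assoc, mul_left_comm, ← Complex.exp_add,
      ← Complex.exp_add, ← Complex.exp_add]
    congr 3
    field_simp
    ring_nf
    simp only [Complex.I_sq]
    ring
  simp only [hterm]
  rw [← Finset.mul_sum, sum_range_prod_θ₃_transformed hm hn hτ hy, cpow_prefactor hm hn hτ0,
    θ₃_functional_equation z τ]
  ring
end

section
/- Let τ be a complex number with Im τ > 0, let q = e^{2πiτ}, let m, n be positive integers, and let y₁, y₂, …, y_n be complex numbers with y₁ + y₂ + ⋯ + y_n = 0. Then G_{m,n}(y₁/(m²nτ), …, y_n/(m²nτ) | −1/(m²nτ)) = ((m²n)^{n/2} / (−iτ)^{(1−n)/2}) · e^{(y₁²+⋯+y_n²)i/(m²nπτ)} · ∑_{k=0}^{n-1} q^{−m²k²/2} ∑_{r₁,…,r_n ∈ ℤ, r₁+⋯+r_n = k} q^{m²n(r₁²+⋯+r_n²)/2} e^{−2i(r₁y₁+⋯+r_ny_n)}. -/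
open scoped BigOperators

theorem hasSum_mul_complex {ι κ : Type*} {f : ι → ℂ} {g : κ → ℂ} {a b : ℂ} (hf : HasSum f a)
    (hg : HasSum g b) : HasSum (fun p : ι × κ => f p.1 * g p.2) (a * b) :=
  hf.mul hg (summable_mul_of_summable_norm hf.summable.norm hg.summable.norm)

open Complex in
theorem hasSum_prod_pi_complex {n : ℕ} (f : Fin n → ℤ → ℂ) (hf : ∀ j, Summable (f j)) :
    HasSum (fun r : Fin n → ℤ => ∏ j, f j (r j)) (∏ j, ∑' i, f j i) := by
  induction n with
  | zero => simp
  | succ n ih =>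
    have htail : HasSum (fun r : Fin n → ℤ => ∏ j, f j.succ (r j))
        (∏ j : Fin n, ∑' i, f j.succ i) :=
      ih (fun j => f j.succ) fun j => hf j.succ
    have hmul := hasSum_mul_complex (hf 0).hasSum htail
    rw [Fin.prod_univ_succ, ← (Fin.consEquiv fun _ : Fin (n + 1) => ℤ).hasSum_iff]
    have heq : (fun r : Fin (n + 1) → ℤ => ∏ j, f j (r j)) ∘ (Fin.consEquiv fun _ => ℤ) =
        fun p : ℤ × (Fin n → ℤ) => f 0 p.1 * ∏ j, f j.succ (p.2 j) := by
      funext p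
      simp [Fin.consEquiv, Fin.prod_univ_succ]
    rw [heq]
    exact hmul

open Complex in
theorem integral_exp_two_pi_int_mul (d : ℤ) :
    ∫ x in (0 : ℝ)..1, cexp (2 * Real.pi * I * d * x) = if d = 0 then 1 else 0 := by
  split_ifs with h
  · simp [h]
  · have hc : 2 * (Real.pi : ℂ) * I * d ≠ 0 := by simp [h, Real.pi_ne_zero]
    rw [integral_exp_mul_complex hc]
    have : cexp (2 * Real.pi * I * d * (1 : ℝ)) = 1 := by
      rw [exp_eq_one_iff]; exact ⟨d, by push_cast; ring⟩
    rw [this]; simp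

open Complex in
/-- Integrating an absolutely convergent Fourier series over a period extracts its constant term. -/
theorem integral_tsum_exp_two_pi {ι : Type*} [Countable ι] (c : ι → ℂ) (d : ι → ℤ)
    (hc : Summable c) :
    ∫ x in (0 : ℝ)..1, ∑' i, c i * cexp (2 * Real.pi * I * d i * x) =
      ∑' i : {i // d i = 0}, c i := by
  have hnorm : ∀ i (x : ℝ), ‖cexp (2 * Real.pi * I * d i * x)‖ = 1 := fun i x => by
    rw [show 2 * (Real.pi : ℂ) * I * d i * x = ((2 * Real.pi * d i * x : ℝ) : ℂ) * I by
      push_cast; ring, norm_exp_ofReal_mul_I]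
  have key := intervalIntegral.hasSum_integral_of_dominated_convergence (a := 0) (b := 1)
    (μ := MeasureTheory.volume)
    (F := fun i (x : ℝ) => c i * cexp (2 * Real.pi * I * d i * x))
    (f := fun x => ∑' i, c i * cexp (2 * Real.pi * I * d i * x))
    (fun i _ => ‖c i‖) (fun i => by fun_prop)
    (fun i => Filter.Eventually.of_forall fun x _ => by simp [hnorm])
    (Filter.Eventually.of_forall fun x _ => hc.norm)
    (by simp)
    (Filter.Eventually.of_forall fun x _ =>
      (Summable.of_norm (by simpa [hnorm] using hc.norm)).hasSum)
  rw [← key.tsum_eq]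
  refine Eq.trans ?_ (tsum_subtype {i | d i = 0} c).symm
  refine tsum_congr fun i => ?_
  rw [intervalIntegral.integral_const_mul, integral_exp_two_pi_int_mul]
  simp [Set.indicator_apply]

open Complex in
theorem integral_jacobiTheta₂_sub (w τ : ℂ) (hτ : 0 < τ.im) :
    ∫ x in (0 : ℝ)..1, jacobiTheta₂ (x - w) τ = 1 := by
  have h := integral_tsum_exp_two_pi (fun l : ℤ => jacobiTheta₂_term l (-w) τ) id
    ((summable_jacobiTheta₂_term_iff _ _).2 hτ)
  have : (∑' i : {i : ℤ // id i = 0}, jacobiTheta₂_term i (-w) τ) = 1 := by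
    rw [tsum_eq_single (⟨0, rfl⟩ : {i : ℤ // id i = 0}) fun b hb => absurd (Subtype.ext b.2) hb]
    simp [jacobiTheta₂_term]
  rw [this] at h
  rw [← h]
  refine intervalIntegral.integral_congr fun x _ => tsum_congr fun l => ?_
  simp only [jacobiTheta₂_term, ← Complex.exp_add, id]
  ring_nf

open Complex in
theorem tsum_exp_sq_sub_int (u T : ℂ) (hT : T ≠ 0) :
    ∑' l : ℤ, cexp (Real.pi * I * T * (u - l) ^ 2) =
      1 / (-I * T) ^ (1 / 2 : ℂ) * jacobiTheta₂ u (-1 / T) := by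
  have h := jacobiTheta₂_functional_equation (-(T * u)) T
  rw [show -(T * u) / T = -u by field_simp, jacobiTheta₂_neg_left u] at h
  have h2 : ∑' l : ℤ, cexp (Real.pi * I * T * (u - l) ^ 2) =
      cexp (Real.pi * I * T * u ^ 2) * jacobiTheta₂ (-(T * u)) T := by
    rw [jacobiTheta₂, ← tsum_mul_left]
    refine tsum_congr fun l => ?_
    rw [jacobiTheta₂_term, ← Complex.exp_add]
    ring_nf
  have hE : cexp (Real.pi * I * T * u ^ 2) * cexp (-Real.pi * I * (-(T * u)) ^ 2 / T) = 1 := by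
    rw [← Complex.exp_add, Complex.exp_eq_one_iff]
    exact ⟨0, by field_simp; ring⟩
  rw [h2, h]
  linear_combination (1 / (-I * T) ^ (1 / 2 : ℂ) * jacobiTheta₂ u (-1 / T)) * hE

open Complex in
theorem prod_jacobiTheta₂_term {n : ℕ} (r : Fin n → ℤ) (z : Fin n → ℂ) (T : ℂ) :
    ∏ j, jacobiTheta₂_term (r j) (z j) T =
      cexp (2 * Real.pi * I * ∑ j, r j * z j + Real.pi * I * T * ∑ j, (r j : ℂ) ^ 2) := by
  simp only [jacobiTheta₂_term, ← Complex.exp_sum, Finset.mul_sum, ← Finset.sum_add_distrib]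
  congr 1
  exact Finset.sum_congr rfl fun j _ => by ring

/-- The theta series of the coset of `Aₙ₋₁` in its dual lattice indexed by `K`. -/
noncomputable def cosetTheta {n : ℕ} (z : Fin n → ℂ) (T : ℂ) (K : ℤ) : ℂ :=
  Complex.exp (-Real.pi * Complex.I * T * K ^ 2 / n) *
    ∑' r : {r : Fin n → ℤ // ∑ j, r j = K}, ∏ j, jacobiTheta₂_term (r.1 j) (z j) T

open Complex in
theorem cosetTheta_add_mul {n : ℕ} (hn : 0 < n) (z : Fin n → ℂ) (hz : ∑ j, z j = 0) (T : ℂ)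
    (K l : ℤ) : cosetTheta z T (l * n + K) = cosetTheta z T K := by
  have hn' : (n : ℂ) ≠ 0 := by exact_mod_cast hn.ne'
  let e : {r : Fin n → ℤ // ∑ j, r j = K} ≃ {r : Fin n → ℤ // ∑ j, r j = l * n + K} :=
    (Equiv.addRight fun _ => l).subtypeEquiv fun r => by
      simp only [Equiv.coe_addRight, Pi.add_apply, Finset.sum_add_distrib, Finset.sum_const,
        Finset.card_univ, Fintype.card_fin, nsmul_eq_mul]
      constructor <;> intro h <;> linarith
  rw [cosetTheta, cosetTheta, ← e.tsum_eq, ← tsum_mul_left, ← tsum_mul_left]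
  refine tsum_congr fun r => ?_
  have hK : (∑ j, (r.1 j : ℂ)) = K := by exact_mod_cast r.2
  have h1 : ∑ j, (((r.1 j + l : ℤ)) : ℂ) * z j = ∑ j, (r.1 j : ℂ) * z j := by
    simp only [Int.cast_add, add_mul, Finset.sum_add_distrib, ← Finset.mul_sum, hz, mul_zero,
      add_zero]
  have h2 : ∑ j, (((r.1 j + l : ℤ)) : ℂ) ^ 2 = ∑ j, (r.1 j : ℂ) ^ 2 + 2 * l * K + n * l ^ 2 := by
    simp only [Int.cast_add, add_sq, Finset.sum_add_distrib, ← Finset.mul_sum, ← Finset.sum_mul,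
      hK, Finset.sum_const, Finset.card_univ, Fintype.card_fin, nsmul_eq_mul]
    ring
  change _ * ∏ j, jacobiTheta₂_term (r.1 j + l) (z j) T = _
  rw [prod_jacobiTheta₂_term (fun j => r.1 j + l), prod_jacobiTheta₂_term, h1, h2,
    ← Complex.exp_add, ← Complex.exp_add]
  congr 1
  push_cast
  field_simp
  ring

open Complex in
/-- A product of theta functions, decomposed along the cosets of `Aₙ₋₁` in its dual lattice. -/
theorem exp_mul_prod_jacobiTheta₂ {n : ℕ} (hn : 0 < n) (z : Fin n → ℂ) (hz : ∑ j, z j = 0)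
    (T : ℂ) (hT : 0 < T.im) (x : ℂ) :
    cexp (Real.pi * I * (n * T) * x ^ 2) * ∏ j, jacobiTheta₂ (z j - T * x) T =
      ∑ k ∈ Finset.range n, cosetTheta z T k *
        ∑' l : ℤ, cexp (Real.pi * I * (n * T) * (x - k / n - l) ^ 2) := by
  have hn' : (n : ℂ) ≠ 0 := by exact_mod_cast hn.ne'
  have : NeZero n := ⟨hn.ne'⟩
  have hprod := (hasSum_prod_pi_complex (fun j l => jacobiTheta₂_term l (z j - T * x) T)
    fun j => (summable_jacobiTheta₂_term_iff _ _).2 hT).mul_left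
      (cexp (Real.pi * I * (n * T) * x ^ 2))
  have hfib := (Equiv.sigmaFiberEquiv fun r : Fin n → ℤ => ∑ j, r j).hasSum_iff.2 hprod
  have hinner : ∀ K : ℤ, (∑' r : {r : Fin n → ℤ // ∑ j, r j = K},
      cexp (Real.pi * I * (n * T) * x ^ 2) *
        ∏ j, jacobiTheta₂_term (r.1 j) (z j - T * x) T) =
      cosetTheta z T K * cexp (Real.pi * I * (n * T) * (x - K / n) ^ 2) := by
    intro K
    rw [cosetTheta, mul_right_comm (cexp _) (tsum _), ← tsum_mul_left]
    refine tsum_congr fun r => ?_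
    have hK : (∑ j, (r.1 j : ℂ)) = K := by exact_mod_cast r.2
    rw [prod_jacobiTheta₂_term, prod_jacobiTheta₂_term, ← Complex.exp_add, ← Complex.exp_add,
      ← Complex.exp_add]
    simp only [mul_sub, Finset.sum_sub_distrib, ← Finset.sum_mul, hK]
    congr 1
    field_simp
    ring
  have hfac := fun K => (hfib.summable.sigma_factor K).hasSum
  have hK := hfib.sigma hfac
  have hK' : HasSum (fun K : ℤ => cosetTheta z T K *
      cexp (Real.pi * I * (n * T) * (x - K / n) ^ 2))
      (cexp (Real.pi * I * (n * T) * x ^ 2) * ∏ j, jacobiTheta₂ (z j - T * x) T) := by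
    rw [← funext hinner]
    exact hK
  have hdm := ((Equiv.prodComm (Fin n) ℤ).trans (Int.divModEquiv n).symm).hasSum_iff.2 hK'
  rw [← hdm.tsum_eq, hdm.summable.tsum_prod, tsum_fintype, Finset.sum_range]
  refine Finset.sum_congr rfl fun k _ => ?_
  rw [← tsum_mul_left]
  refine tsum_congr fun l => ?_
  simp only [Function.comp_apply, Equiv.trans_apply, Equiv.prodComm_apply, Prod.swap_prod_mk,
    Int.divModEquiv_symm_apply]
  rw [cosetTheta_add_mul hn z hz]
  congr 2
  push_cast
  field_simp
  ring

open Complex in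
/-- Poisson summation for the theta series of the root lattice `Aₙ₋₁`. -/
theorem tsum_sum_eq_zero_prod_jacobiTheta₂_term {n : ℕ} (hn : 0 < n) (z : Fin n → ℂ)
    (hz : ∑ j, z j = 0) (T : ℂ) (hT : 0 < T.im) :
    ∑' r : {r : Fin n → ℤ // ∑ j, r j = 0}, ∏ j, jacobiTheta₂_term (r.1 j) (z j / T) (-1 / T) =
      ((-I * T) ^ (1 / 2 : ℂ)) ^ n * cexp (Real.pi * I * (∑ j, z j ^ 2) / T) *
        (1 / (-I * (n * T)) ^ (1 / 2 : ℂ)) *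
          ∑ k ∈ Finset.range n, cosetTheta (fun j => -z j) T k := by
  have hT0 : T ≠ 0 := by rintro rfl; simp at hT
  have hn' : (n : ℂ) ≠ 0 := by exact_mod_cast hn.ne'
  have him : ∀ S : ℂ, 0 < S.im → 0 < (-1 / S).im := fun S hS => by
    have hS0 : S ≠ 0 := by rintro rfl; simp at hS
    rw [neg_div, neg_im, one_div, inv_im, neg_div, neg_neg]
    exact div_pos hS (normSq_pos.2 hS0)
  have hnT : 0 < ((n : ℂ) * T).im := by
    simpa using mul_pos (Nat.cast_pos.2 hn : (0 : ℝ) < n) hT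
  have hsqrt : (-I * T) ^ (1 / 2 : ℂ) ≠ 0 := by
    rw [Ne, cpow_eq_zero_iff]; simp [hT0]
  have hfun : ∀ x : ℂ, ∏ j, jacobiTheta₂ (z j / T + x) (-1 / T) =
      ((-I * T) ^ (1 / 2 : ℂ)) ^ n * cexp (Real.pi * I * (∑ j, z j ^ 2) / T) *
        (1 / (-I * (n * T)) ^ (1 / 2 : ℂ)) * ∑ k ∈ Finset.range n,
          cosetTheta (fun j => -z j) T k * jacobiTheta₂ (x - k / n) (-1 / (n * T)) := by
    intro x
    have h1 : ∀ j, jacobiTheta₂ (z j / T + x) (-1 / T) = (-I * T) ^ (1 / 2 : ℂ) *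
        (cexp (Real.pi * I * (z j + T * x) ^ 2 / T) * jacobiTheta₂ (-z j - T * x) T) := by
      intro j
      rw [show -z j - T * x = -(z j + T * x) by ring, jacobiTheta₂_neg_left,
        jacobiTheta₂_functional_equation (z j + T * x) T,
        show (z j + T * x) / T = z j / T + x by field_simp]
      have : cexp (Real.pi * I * (z j + T * x) ^ 2 / T) *
          cexp (-Real.pi * I * (z j + T * x) ^ 2 / T) = 1 := by
        rw [← Complex.exp_add, Complex.exp_eq_one_iff]; exact ⟨0, by ring⟩
      generalize jacobiTheta₂ (z j / T + x) (-1 / T) = J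
      generalize cexp (Real.pi * I * (z j + T * x) ^ 2 / T) = E at this ⊢
      generalize cexp (-Real.pi * I * (z j + T * x) ^ 2 / T) = E' at this ⊢
      generalize (-I * T) ^ (1 / 2 : ℂ) = a at hsqrt ⊢
      field_simp
      linear_combination (-J) * this
    have h2 := exp_mul_prod_jacobiTheta₂ hn (fun j => -z j) (by simp [hz]) T hT x
    simp only [tsum_exp_sq_sub_int _ _ (mul_ne_zero hn' hT0)] at h2
    have h3 : ∏ j, cexp (Real.pi * I * (z j + T * x) ^ 2 / T) =
        cexp (Real.pi * I * (∑ j, z j ^ 2) / T) * cexp (Real.pi * I * (n * T) * x ^ 2) := by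
      rw [← Complex.exp_sum, ← Complex.exp_add]
      congr 1
      have : ∑ j, (z j + T * x) ^ 2 = ∑ j, z j ^ 2 + n * (T * x) ^ 2 := by
        simp only [add_sq, Finset.sum_add_distrib, ← Finset.sum_mul, ← Finset.mul_sum, hz,
          Finset.sum_const, Finset.card_univ, Fintype.card_fin, nsmul_eq_mul]
        ring
      rw [← Finset.sum_div, ← Finset.mul_sum, this]
      field_simp
    simp only [h1, Finset.prod_mul_distrib, Finset.prod_const, Finset.card_univ,
      Fintype.card_fin, h3]
    rw [mul_assoc (cexp _), h2]
    generalize cexp (Real.pi * I * (∑ j, z j ^ 2) / T) = E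
    rw [Finset.mul_sum, Finset.mul_sum, Finset.mul_sum]
    exact Finset.sum_congr rfl fun k _ => by ring
  have hL := integral_tsum_exp_two_pi
    (fun r : Fin n → ℤ => ∏ j, jacobiTheta₂_term (r j) (z j / T) (-1 / T)) (fun r => ∑ j, r j)
    (hasSum_prod_pi_complex (fun j l => jacobiTheta₂_term l (z j / T) (-1 / T))
      fun j => (summable_jacobiTheta₂_term_iff _ _).2 (him T hT)).summable
  rw [← hL]
  have hcongr : ∀ x : ℝ, (∑' r : Fin n → ℤ,
      (∏ j, jacobiTheta₂_term (r j) (z j / T) (-1 / T)) *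
        cexp (2 * Real.pi * I * (∑ j, r j : ℤ) * x)) =
      ∏ j, jacobiTheta₂ (z j / T + x) (-1 / T) := by
    intro x
    have h := hasSum_prod_pi_complex (fun j l => jacobiTheta₂_term l (z j / T + x) (-1 / T))
      fun j => (summable_jacobiTheta₂_term_iff _ _).2 (him T hT)
    refine Eq.trans (tsum_congr fun r => ?_) h.tsum_eq
    rw [prod_jacobiTheta₂_term, prod_jacobiTheta₂_term, ← Complex.exp_add]
    simp only [mul_add, Finset.sum_add_distrib, ← Finset.sum_mul]
    congr 1
    push_cast
    ring
  simp only [hcongr, hfun]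
  rw [intervalIntegral.integral_const_mul, intervalIntegral.integral_finsetSum]
  · simp only [intervalIntegral.integral_const_mul, integral_jacobiTheta₂_sub _ _ (him _ hnT),
      mul_one]
  · intro k _
    refine Continuous.intervalIntegrable ?_ _ _
    refine continuous_const.mul (continuous_iff_continuousAt.2 fun x => ?_)
    exact (differentiableAt_jacobiTheta₂_fst _ (him _ hnT)).continuousAt.comp
      (f := fun x : ℝ => (x : ℂ) - k / n) (by fun_prop)

open Complex in
theorem ofReal_mul_cpow {r : ℝ} (hr : 0 < r) {x : ℂ} (hx : x ≠ 0) (s : ℂ) :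
    ((r : ℂ) * x) ^ s = (r : ℂ) ^ s * x ^ s := by
  have hr' : (r : ℂ) ≠ 0 := by exact_mod_cast hr.ne'
  rw [cpow_def_of_ne_zero (mul_ne_zero hr' hx), cpow_def_of_ne_zero hr', cpow_def_of_ne_zero hx,
    log_ofReal_mul hr hx, ← Complex.exp_add, ofReal_log hr.le, add_mul]

open Complex in
theorem G_imaginary_transformation_factor {τ : ℂ} (hτ : τ ≠ 0) {m n : ℕ} (hm : 0 < m)
    (hn : 0 < n) :
    (m : ℂ) * n * (((-I * ((m : ℂ) ^ 2 * n * τ)) ^ (1 / 2 : ℂ)) ^ n *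
        (1 / (-I * (n * ((m : ℂ) ^ 2 * n * τ))) ^ (1 / 2 : ℂ))) =
      ((m : ℂ) ^ 2 * n) ^ ((n : ℂ) / 2) / (-I * τ) ^ ((1 - (n : ℂ)) / 2) := by
  have hx : -I * τ ≠ 0 := by simp [hτ]
  have hm' : (0 : ℝ) < m := Nat.cast_pos.2 hm
  have hn' : (0 : ℝ) < n := Nat.cast_pos.2 hn
  have hc : (0 : ℝ) < (m : ℝ) ^ 2 * n := by positivity
  have hmn : (0 : ℝ) < (m * n : ℝ) := by positivity
  have h1 : (-I * ((m : ℂ) ^ 2 * n * τ)) ^ (1 / 2 : ℂ) =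
      ((m : ℂ) ^ 2 * n) ^ (1 / 2 : ℂ) * (-I * τ) ^ (1 / 2 : ℂ) := by
    have := ofReal_mul_cpow hc hx (1 / 2)
    push_cast at this
    rw [← this]
    ring_nf
  have h2 : (-I * (n * ((m : ℂ) ^ 2 * n * τ))) ^ (1 / 2 : ℂ) =
      (m * n) * (-I * τ) ^ (1 / 2 : ℂ) := by
    have h := ofReal_mul_cpow (pow_pos hmn 2) hx (1 / 2)
    have hs : (((m * n : ℝ) ^ 2 : ℝ) : ℂ) ^ (1 / 2 : ℂ) = m * n := by
      rw [show (1 / 2 : ℂ) = ((1 / 2 : ℝ) : ℂ) by push_cast; rfl, ← ofReal_cpow (by positivity),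
        ← Real.sqrt_eq_rpow, Real.sqrt_sq hmn.le]
      push_cast; rfl
    rw [hs] at h
    rw [← h]
    push_cast
    ring_nf
  have hmn' : (m : ℂ) * n ≠ 0 := by exact_mod_cast (Nat.mul_pos hm hn).ne'
  have hs0 : (-I * τ) ^ (1 / 2 : ℂ) ≠ 0 := by rw [Ne, cpow_eq_zero_iff]; simp [hτ]
  rw [h1, h2, mul_pow, ← cpow_nat_mul, ← cpow_nat_mul, sub_div, cpow_sub _ _ hx,
    show (n : ℂ) * (1 / 2) = n / 2 by ring]
  have hs1 : (-I * τ) ^ ((n : ℂ) / 2) ≠ 0 := by rw [Ne, cpow_eq_zero_iff]; simp [hτ]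
  generalize ((m : ℂ) ^ 2 * n) ^ ((n : ℂ) / 2) = A
  generalize (-I * τ) ^ ((n : ℂ) / 2) = B at hs1 ⊢
  generalize (-I * τ) ^ (1 / 2 : ℂ) = C at hs0 ⊢
  generalize (m : ℂ) * n = D at hmn' ⊢
  field_simp
theorem G_imaginary_transformation (τ : ℂ) (hτ : 0 < τ.im) (m n : ℕ) (hm : 0 < m) (hn : 0 < n)
    (y : Fin n → ℂ) (hy : ∑ j, y j = 0) :
    G m n (fun j => y j / ((m : ℂ) ^ 2 * n * τ)) (-1 / ((m : ℂ) ^ 2 * n * τ))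
    = (((m : ℂ) ^ 2 * n) ^ ((n : ℂ) / 2) / (-Complex.I * τ) ^ ((1 - (n : ℂ)) / 2)) *
        Complex.exp ((∑ j, y j ^ 2) * Complex.I / ((m : ℂ) ^ 2 * n * Real.pi * τ)) *
        ∑ k ∈ Finset.range n,
          Complex.exp (2 * Real.pi * Complex.I * τ * (-((m : ℂ) ^ 2 * (k : ℂ) ^ 2) / 2)) *
            ∑' r : {r : Fin n → ℤ // ∑ j, r j = (k : ℤ)},
              Complex.exp (2 * Real.pi * Complex.I * τ *
                  ((m : ℂ) ^ 2 * (n : ℂ) * (∑ j, ((r.1 j : ℂ)) ^ 2) / 2)) *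
                Complex.exp (-2 * Complex.I * ∑ j, (r.1 j : ℂ) * y j) := by
  have hτ0 : τ ≠ 0 := by rintro rfl; simp at hτ
  have hc0 : (m : ℂ) ^ 2 * n ≠ 0 := by
    exact_mod_cast (Nat.mul_pos (pow_pos hm 2) hn).ne'
  have hn0 : (n : ℂ) ≠ 0 := by exact_mod_cast hn.ne'
  have hT : 0 < ((m : ℂ) ^ 2 * n * τ).im := by
    have : (m : ℂ) ^ 2 * n = ((m ^ 2 * n : ℝ) : ℂ) := by push_cast; rfl
    rw [this, Complex.im_ofReal_mul]
    have hm' : (0 : ℝ) < m := Nat.cast_pos.2 hm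
    have hn' : (0 : ℝ) < n := Nat.cast_pos.2 hn
    positivity
  have hπ : (Real.pi : ℂ) ≠ 0 := by exact_mod_cast Real.pi_ne_zero
  have key := tsum_sum_eq_zero_prod_jacobiTheta₂_term hn (fun j => y j / Real.pi)
    (by rw [← Finset.sum_div, hy, zero_div]) _ hT
  have hleft : G m n (fun j => y j / ((m : ℂ) ^ 2 * n * τ)) (-1 / ((m : ℂ) ^ 2 * n * τ)) =
      m * n * ∑' r : {r : Fin n → ℤ // ∑ j, r j = 0}, ∏ j, jacobiTheta₂_term (r.1 j)
        (y j / Real.pi / ((m : ℂ) ^ 2 * n * τ)) (-1 / ((m : ℂ) ^ 2 * n * τ)) := by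
    rw [G]
    congr 1
    refine tsum_congr fun r => ?_
    rw [prod_jacobiTheta₂_term, ← Complex.exp_add]
    have : ∑ j, (r.1 j : ℂ) * (y j / Real.pi / ((m : ℂ) ^ 2 * n * τ)) =
        (∑ j, (r.1 j : ℂ) * (y j / ((m : ℂ) ^ 2 * n * τ))) / Real.pi := by
      rw [Finset.sum_div]
      exact Finset.sum_congr rfl fun j _ => by ring
    rw [this]
    congr 1
    field_simp
    ring
  have hexp : Complex.exp (Real.pi * Complex.I * (∑ j, (y j / Real.pi) ^ 2) /
      ((m : ℂ) ^ 2 * n * τ)) =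
      Complex.exp ((∑ j, y j ^ 2) * Complex.I / ((m : ℂ) ^ 2 * n * Real.pi * τ)) := by
    simp only [div_pow, ← Finset.sum_div]
    congr 1
    field_simp
  have hcoset : ∀ k : ℕ, cosetTheta (fun j => -(y j / Real.pi)) ((m : ℂ) ^ 2 * n * τ) k =
      Complex.exp (2 * Real.pi * Complex.I * τ * (-((m : ℂ) ^ 2 * (k : ℂ) ^ 2) / 2)) *
        ∑' r : {r : Fin n → ℤ // ∑ j, r j = (k : ℤ)},
          Complex.exp (2 * Real.pi * Complex.I * τ *
              ((m : ℂ) ^ 2 * (n : ℂ) * (∑ j, ((r.1 j : ℂ)) ^ 2) / 2)) *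
            Complex.exp (-2 * Complex.I * ∑ j, (r.1 j : ℂ) * y j) := by
    intro k
    rw [cosetTheta]
    congr 1
    · congr 1
      push_cast
      field_simp
    · refine tsum_congr fun r => ?_
      rw [prod_jacobiTheta₂_term, ← Complex.exp_add]
      have : ∑ j, (r.1 j : ℂ) * -(y j / Real.pi) = -((∑ j, (r.1 j : ℂ) * y j) / Real.pi) := by
        rw [Finset.sum_div, ← Finset.sum_neg_distrib]
        exact Finset.sum_congr rfl fun j _ => by ring
      rw [this]
      congr 1
      field_simp
      ring
  rw [hleft, key, hexp, ← G_imaginary_transformation_factor hτ0 hm hn]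
  simp only [hcoset]
  ring
end

section
/- Let τ be a complex number with Im τ > 0, let q = e^{2πiτ}, and let y₁, y₂ be complex numbers. Then G_{1,3}(y₁/τ, y₂/τ, (−y₁−y₂)/τ | −1/τ) = −√3 · i · τ · e^{2i(y₁²+y₂²+y₁y₂)/(πτ)} · [ ∑_{r₁,r₂ ∈ ℤ} q^{r₁²+r₂²+r₁r₂} e^{2ir₁(2y₁+y₂)+2ir₂(y₁+2y₂)} + e^{2i(y₁+y₂)} ∑_{r₁,r₂ ∈ ℤ} q^{r₁²+r₂²+r₁r₂+r₁+r₂+1/3} e^{2ir₁(2y₁+y₂)+2ir₂(y₁+2y₂)} + e^{−2i(y₁+y₂)} ∑_{r₁,r₂ ∈ ℤ} q^{r₁²+r₂²+r₁r₂+r₁+r₂+1/3} e^{−2ir₁(2y₁+y₂)−2ir₂(y₁+2y₂)} ]. -/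
open scoped BigOperators

open Complex in
/-- A one-dimensional Gaussian sum over `ℤ` with decaying quadratic term converges absolutely. -/
lemma summable_norm_cexp_quadratic {A : ℂ} (hA : A.re < 0) (B C : ℂ) :
    Summable fun n : ℤ => ‖cexp (A * n ^ 2 + B * n + C)‖ := by
  have hpi : (Real.pi : ℂ) ≠ 0 := ofReal_ne_zero.mpr Real.pi_ne_zero
  have him : 0 < (A / (Real.pi * I)).im := by
    have : A / (Real.pi * I) = ((-1 / Real.pi : ℝ) : ℂ) * (A * I) := by
      push_cast
      field_simp
      rw [I_sq]
      ring
    rw [this, im_ofReal_mul, mul_I_im]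
    exact mul_pos_of_neg_of_neg (div_neg_of_neg_of_pos (by norm_num) Real.pi_pos) hA
  have h := ((summable_jacobiTheta₂_term_iff (B / (2 * Real.pi * I)) _).mpr him).norm.mul_right
    ‖cexp C‖
  refine h.congr fun n => ?_
  rw [← norm_mul, jacobiTheta₂_term, ← Complex.exp_add]
  congr 2
  field_simp [I_ne_zero]
  ring

open Complex in
lemma summable_norm_cexp_quadratic_prod {A D : ℂ} (hA : A.re < 0) (hD : D.re < 0)
    (B C E F : ℂ) :
    Summable fun p : ℤ × ℤ =>
      ‖cexp (A * p.1 ^ 2 + B * p.1 + C + (D * p.2 ^ 2 + E * p.2 + F))‖ := by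
  refine ((summable_norm_cexp_quadratic hA B C).mul_of_nonneg
    (summable_norm_cexp_quadratic hD E F) (fun _ => norm_nonneg _)
    (fun _ => norm_nonneg _)).congr fun p => ?_
  rw [← norm_mul, ← Complex.exp_add]

open Complex in
/-- Poisson summation for the one-dimensional theta series, with the square completed. -/
lemma tsum_cexp_eq_tsum_cexp_sq_div {T : ℂ} (hT : T ≠ 0) (z c : ℂ) :
    ∑' n : ℤ, cexp (Real.pi * I * (2 * n * z + n ^ 2 * T + c)) =
      1 / (-I * T) ^ (1 / 2 : ℂ) *
        ∑' n : ℤ, cexp (Real.pi * I * (-(n - z) ^ 2 / T + c)) := by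
  have h := congrArg (· * cexp (Real.pi * I * c)) (jacobiTheta₂_functional_equation z T)
  simp only [jacobiTheta₂, mul_assoc] at h
  rw [← tsum_mul_right, ← tsum_mul_right, ← tsum_mul_left] at h
  convert h using 1
  · refine tsum_congr fun n => ?_
    rw [jacobiTheta₂_term, ← Complex.exp_add]
    congr 1
    ring
  · congr 1
    refine tsum_congr fun n => ?_
    rw [jacobiTheta₂_term, ← Complex.exp_add, ← Complex.exp_add]
    congr 1
    field_simp
    ring

open Complex in
lemma cpow_half_mul_cpow_half {s : ℂ} (hs : s ≠ 0) {a b : ℝ} (ha : 0 < a) (hb : 0 < b) :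
    (a * s) ^ (1 / 2 : ℂ) * (b * s) ^ (1 / 2 : ℂ) = √(a * b) * s := by
  have ha' : (a : ℂ) ≠ 0 := ofReal_ne_zero.mpr ha.ne'
  have hb' : (b : ℂ) ≠ 0 := ofReal_ne_zero.mpr hb.ne'
  have hsqrt : ((√(a * b) : ℝ) : ℂ) = cexp ((Real.log a + Real.log b) / 2) := by
    rw [← ofReal_add, ← Real.log_mul ha.ne' hb.ne', Real.sqrt_eq_rpow,
      Real.rpow_def_of_pos (mul_pos ha hb)]
    push_cast
    congr 1
    ring
  rw [cpow_def_of_ne_zero (mul_ne_zero ha' hs), cpow_def_of_ne_zero (mul_ne_zero hb' hs),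
    log_ofReal_mul ha hs, log_ofReal_mul hb hs, ← Complex.exp_add, hsqrt]
  nth_rw 3 [← exp_log hs]
  rw [← Complex.exp_add]
  congr 1
  ring

open Complex in
lemma pi_mul_I_mul_neg_div_re_neg {τ : ℂ} (hτ : 0 < τ.im) {c : ℝ} (hc : 0 < c) :
    (Real.pi * I * (-c / τ)).re < 0 := by
  have hτ0 : τ ≠ 0 := by rintro rfl; simp at hτ
  have : Real.pi * I * (-c / τ) = ((-(Real.pi * c / normSq τ) : ℝ) : ℂ) *
      (I * (starRingEnd ℂ) τ) := by
    rw [div_eq_mul_inv, inv_def]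
    push_cast
    ring
  rw [this, re_ofReal_mul]
  rw [show (I * (starRingEnd ℂ) τ).re = τ.im by simp]
  have := normSq_pos.mpr hτ0
  have := Real.pi_pos
  exact mul_neg_of_neg_of_pos (neg_neg_of_pos (by positivity)) hτ

open Complex in
lemma pi_mul_I_mul_re_neg {τ : ℂ} (hτ : 0 < τ.im) {c : ℝ} (hc : 0 < c) :
    (Real.pi * I * (c * τ)).re < 0 := by
  have : Real.pi * I * (c * τ) = ((Real.pi * c : ℝ) : ℂ) * (I * τ) := by push_cast; ring
  rw [this, re_ofReal_mul, I_mul_re]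
  have := Real.pi_pos
  exact mul_neg_of_pos_of_neg (by positivity) (neg_neg_of_pos hτ)

open Complex in
lemma summable_cexp_hexagonal {τ : ℂ} (hτ : 0 < τ.im) (w₁ w₂ : ℂ) :
    Summable fun p : ℤ × ℤ => cexp (Real.pi * I * (2 * τ / 3 *
      ((p.1 - w₁) ^ 2 - (p.1 - w₁) * (p.2 - w₂) + (p.2 - w₂) ^ 2))) := by
  have h := (summable_norm_cexp_quadratic_prod
      (pi_mul_I_mul_re_neg hτ (c := 1 / 2) (by norm_num))
    (pi_mul_I_mul_re_neg hτ (c := 1 / 6) (by norm_num))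
      (-Real.pi * I * τ * w₁) (Real.pi * I * τ * w₁ ^ 2 / 2)
    (Real.pi * I * τ * (2 * w₂ - w₁) / 3)
    (Real.pi * I * τ * (2 * w₂ - w₁) ^ 2 / 6)).of_norm
  have hinj : Function.Injective fun p : ℤ × ℤ => (p.1, p.1 - 2 * p.2) := by
    rintro ⟨a, b⟩ ⟨c, d⟩ h
    simp only [Prod.mk.injEq] at h ⊢
    omega
  refine (h.comp_injective hinj).congr fun p => ?_
  simp only [Function.comp_apply]
  congr 1
  push_cast
  ring

open Complex in
lemma one_div_cpow_half_mul_one_div_cpow_half {τ : ℂ} (hτ0 : τ ≠ 0) :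
    1 / (-I * (-2 / τ)) ^ (1 / 2 : ℂ) * (1 / (-I * (-3 / (2 * τ))) ^ (1 / 2 : ℂ)) =
      -I * τ / √3 := by
  have h := cpow_half_mul_cpow_half (s := I / τ) (div_ne_zero I_ne_zero hτ0)
    (a := 2) (b := 3 / 2) (by norm_num) (by norm_num)
  have e₁ : -I * (-2 / τ) = ((2 : ℝ) : ℂ) * (I / τ) := by push_cast; ring
  have e₂ : -I * (-3 / (2 * τ)) = ((3 / 2 : ℝ) : ℂ) * (I / τ) := by
    push_cast; field_simp
  have h3 : (√3 : ℂ) ≠ 0 := ofReal_ne_zero.mpr (by positivity)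
  rw [e₁, e₂, one_div_mul_one_div, h, show (2 : ℝ) * (3 / 2) = 3 by norm_num]
  field_simp
  rw [I_sq]
  ring

open Complex in
/-- Poisson summation for the theta series of the hexagonal lattice `A₂`. -/
lemma tsum_cexp_hexagonal {τ : ℂ} (hτ : 0 < τ.im) (w₁ w₂ : ℂ) :
    ∑' p : ℤ × ℤ, cexp (Real.pi * I *
        (-(2 * (p.1 ^ 2 + p.1 * p.2 + p.2 ^ 2)) / τ + 2 * p.1 * w₁ + 2 * p.2 * w₂)) =
      -I * τ / √3 * ∑' p : ℤ × ℤ, cexp (Real.pi * I * (2 * τ / 3 *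
        ((p.1 - w₁) ^ 2 - (p.1 - w₁) * (p.2 - w₂) + (p.2 - w₂) ^ 2))) := by
  have hτ0 : τ ≠ 0 := by rintro rfl; simp at hτ
  -- summability of the original series, in the coordinates `b`, `2 * a + b`
  have hsum₁ : Summable fun p : ℤ × ℤ => cexp (Real.pi * I *
      (2 * p.1 * (w₁ - p.2 / τ) + p.1 ^ 2 * (-2 / τ) +
        (-(2 * p.2 ^ 2) / τ + 2 * p.2 * w₂))) := by
    have h := (summable_norm_cexp_quadratic_prod
      (pi_mul_I_mul_neg_div_re_neg hτ (c := 3 / 2) (by norm_num))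
      (pi_mul_I_mul_neg_div_re_neg hτ (c := 1 / 2) (by norm_num))
      (Real.pi * I * (2 * w₂ - w₁)) 0 (Real.pi * I * w₁) 0).of_norm
    have hinj : Function.Injective fun p : ℤ × ℤ => (p.2, 2 * p.1 + p.2) := by
      rintro ⟨a, b⟩ ⟨c, d⟩ h
      simp only [Prod.mk.injEq] at h ⊢
      omega
    refine (h.comp_injective hinj).congr fun p => ?_
    simp only [Function.comp_apply]
    congr 1
    push_cast
    field_simp
    ring
  have hsum₂ : Summable (Function.uncurry fun b n : ℤ => cexp (Real.pi * I *
      (-(n - (w₁ - b / τ)) ^ 2 / (-2 / τ) + (-(2 * b ^ 2) / τ + 2 * b * w₂)))) := by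
    refine Summable.of_norm ?_
    refine (summable_norm_cexp_quadratic_prod
      (pi_mul_I_mul_neg_div_re_neg hτ (c := 3 / 2) (by norm_num))
      (pi_mul_I_mul_re_neg hτ (c := 1 / 2) (by norm_num))
      (Real.pi * I * (2 * w₂ - w₁)) 0
      (-Real.pi * I * τ * w₁) (Real.pi * I * τ * w₁ ^ 2 / 2)).congr fun ⟨b, n⟩ => ?_
    rw [Function.uncurry_apply_pair]
    have hone : ‖cexp (((Real.pi * b * n : ℝ) : ℂ) * I)‖ = 1 := norm_exp_ofReal_mul_I _
    rw [← mul_one ‖cexp _‖]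
    refine (congrArg ((_ : ℝ) * ·) hone.symm).trans ?_
    rw [← norm_mul, ← Complex.exp_add]
    congr 2
    push_cast
    field_simp
    ring
  calc
    _ = ∑' p : ℤ × ℤ, cexp (Real.pi * I *
          (2 * p.1 * (w₁ - p.2 / τ) + p.1 ^ 2 * (-2 / τ) +
            (-(2 * p.2 ^ 2) / τ + 2 * p.2 * w₂))) := by
      refine tsum_congr fun p => ?_
      congr 1
      field_simp
      ring
    _ = ∑' (b : ℤ) (a : ℤ), cexp (Real.pi * I *
          (2 * a * (w₁ - b / τ) + a ^ 2 * (-2 / τ) + (-(2 * b ^ 2) / τ + 2 * b * w₂))) := by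
      rw [hsum₁.tsum_prod]
      exact (Summable.tsum_comm hsum₁).symm
    _ = 1 / (-I * (-2 / τ)) ^ (1 / 2 : ℂ) * ∑' (b : ℤ) (n : ℤ), cexp (Real.pi * I *
          (-(n - (w₁ - b / τ)) ^ 2 / (-2 / τ) + (-(2 * b ^ 2) / τ + 2 * b * w₂))) := by
      rw [← tsum_mul_left]
      refine tsum_congr fun b => ?_
      exact tsum_cexp_eq_tsum_cexp_sq_div (by simp [hτ0]) _ _
    _ = 1 / (-I * (-2 / τ)) ^ (1 / 2 : ℂ) * ∑' (n : ℤ) (b : ℤ), cexp (Real.pi * I *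
          (2 * b * ((2 * w₂ - w₁ + n) / 2) + b ^ 2 * (-3 / (2 * τ)) +
            τ / 2 * (w₁ - n) ^ 2)) := by
      rw [← Summable.tsum_comm hsum₂]
      congr 1
      refine tsum_congr fun n => tsum_congr fun b => ?_
      congr 1
      field_simp
      ring
    _ = -I * τ / √3 * ∑' (n : ℤ) (k : ℤ), cexp (Real.pi * I * (2 * τ / 3 *
          ((n - w₁) ^ 2 - (n - w₁) * (k - w₂) + (k - w₂) ^ 2))) := by
      rw [← one_div_cpow_half_mul_one_div_cpow_half hτ0, mul_assoc]
      congr 1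
      rw [← tsum_mul_left]
      refine tsum_congr fun n => ?_
      refine (tsum_cexp_eq_tsum_cexp_sq_div (by simp [hτ0]) _ _).trans ?_
      congr 1
      refine tsum_congr fun k => ?_
      congr 1
      field_simp
      ring
    _ = _ := by rw [(summable_cexp_hexagonal hτ w₁ w₂).tsum_prod]

/-- Splitting a sum over `ℤ²` according to the class of `p.1 + p.2` modulo `3`. -/
lemma tsum_eq_add_add_of_summable {f : ℤ × ℤ → ℂ} (hf : Summable f) :
    ∑' p, f p = ∑' r : ℤ × ℤ, f (-(2 * r.1 + r.2), -(r.1 + 2 * r.2)) +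
      ∑' r : ℤ × ℤ, f (-(2 * r.1 + r.2 + 1), -(r.1 + 2 * r.2 + 1)) +
      ∑' r : ℤ × ℤ, f (2 * r.1 + r.2 + 1, r.1 + 2 * r.2 + 1) := by
  let g : Fin 3 × ℤ × ℤ → ℤ × ℤ := fun x =>
    ![(-(2 * x.2.1 + x.2.2), -(x.2.1 + 2 * x.2.2)),
      (-(2 * x.2.1 + x.2.2 + 1), -(x.2.1 + 2 * x.2.2 + 1)),
      (2 * x.2.1 + x.2.2 + 1, x.2.1 + 2 * x.2.2 + 1)] x.1
  have hinj : Function.Injective g := by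
    rintro ⟨i, a, b⟩ ⟨j, c, d⟩ h
    fin_cases i <;> fin_cases j <;> simp [g] at h ⊢ <;> omega
  have hsurj : Function.Surjective g := by
    rintro ⟨m, k⟩
    have h3 : (m + k) % 3 = 0 ∨ (m + k) % 3 = 1 ∨ (m + k) % 3 = 2 := by omega
    rcases h3 with h | h | h
    · refine ⟨(0, (m + k) / 3 - m, (m + k) / 3 - k), ?_⟩
      simp only [g, Matrix.cons_val, Prod.mk.injEq]
      omega
    · refine ⟨(1, (m + k) / 3 - m, (m + k) / 3 - k), ?_⟩
      simp only [g, Matrix.cons_val, Prod.mk.injEq]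
      omega
    · refine ⟨(2, m - 1 - (m + k) / 3, k - 1 - (m + k) / 3), ?_⟩
      simp only [g, Matrix.cons_val, Prod.mk.injEq]
      omega
  rw [← (Equiv.ofBijective g ⟨hinj, hsurj⟩).tsum_eq f,
    Summable.tsum_prod (f := fun x => f (Equiv.ofBijective g ⟨hinj, hsurj⟩ x))
      (hf.comp_injective hinj), tsum_fintype, Fin.sum_univ_three]
  rfl

/-- The triples of integers with sum zero are parametrised by their first two entries. -/
def intPairEquivSumZero : ℤ × ℤ ≃ {r : Fin 3 → ℤ // ∑ j, r j = 0} where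
  toFun p := ⟨![p.1, p.2, -p.1 - p.2], by simp [Fin.sum_univ_three]⟩
  invFun r := (r.1 0, r.1 1)
  left_inv _ := rfl
  right_inv := by
    rintro ⟨r, hr⟩
    rw [Fin.sum_univ_three] at hr
    ext j
    fin_cases j
    · rfl
    · rfl
    · change -r 0 - r 1 = r 2
      omega

lemma coe_intPairEquivSumZero (p : ℤ × ℤ) :
    (intPairEquivSumZero p : Fin 3 → ℤ) = ![p.1, p.2, -p.1 - p.2] := rfl

theorem G13_imaginary_transformation (τ : ℂ) (hτ : 0 < τ.im) (y₁ y₂ : ℂ) :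
    G 1 3 ![y₁ / τ, y₂ / τ, (-y₁ - y₂) / τ] (-1 / τ)
    = -(Real.sqrt 3 : ℂ) * Complex.I * τ *
        Complex.exp (2 * Complex.I * (y₁ ^ 2 + y₂ ^ 2 + y₁ * y₂) / (Real.pi * τ)) *
        ((∑' r : ℤ × ℤ,
            Complex.exp (2 * Real.pi * Complex.I * τ *
                ((r.1 : ℂ) ^ 2 + (r.2 : ℂ) ^ 2 + (r.1 : ℂ) * (r.2 : ℂ))) *
              Complex.exp (2 * Complex.I * (r.1 : ℂ) * (2 * y₁ + y₂) +
                2 * Complex.I * (r.2 : ℂ) * (y₁ + 2 * y₂)))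
          + Complex.exp (2 * Complex.I * (y₁ + y₂)) *
            ∑' r : ℤ × ℤ,
              Complex.exp (2 * Real.pi * Complex.I * τ *
                  ((r.1 : ℂ) ^ 2 + (r.2 : ℂ) ^ 2 + (r.1 : ℂ) * (r.2 : ℂ) +
                    (r.1 : ℂ) + (r.2 : ℂ) + 1 / 3)) *
                Complex.exp (2 * Complex.I * (r.1 : ℂ) * (2 * y₁ + y₂) +
                  2 * Complex.I * (r.2 : ℂ) * (y₁ + 2 * y₂))
          + Complex.exp (-2 * Complex.I * (y₁ + y₂)) *
            ∑' r : ℤ × ℤ,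
              Complex.exp (2 * Real.pi * Complex.I * τ *
                  ((r.1 : ℂ) ^ 2 + (r.2 : ℂ) ^ 2 + (r.1 : ℂ) * (r.2 : ℂ) +
                    (r.1 : ℂ) + (r.2 : ℂ) + 1 / 3)) *
                Complex.exp (-2 * Complex.I * (r.1 : ℂ) * (2 * y₁ + y₂) -
                  2 * Complex.I * (r.2 : ℂ) * (y₁ + 2 * y₂))) := by
  have hτ0 : τ ≠ 0 := by rintro rfl; simp at hτ
  have hpi : (Real.pi : ℂ) ≠ 0 := Complex.ofReal_ne_zero.mpr Real.pi_ne_zero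
  have h3 : (3 : ℂ) = (√3 : ℂ) * √3 := by
    rw [← Complex.ofReal_mul, Real.mul_self_sqrt (by norm_num)]
    norm_num
  have h3' : (√3 : ℂ) ≠ 0 := Complex.ofReal_ne_zero.mpr (by positivity)
  have hG : G 1 3 ![y₁ / τ, y₂ / τ, (-y₁ - y₂) / τ] (-1 / τ) =
      3 * ∑' p : ℤ × ℤ, Complex.exp (Real.pi * Complex.I *
        (-(2 * (p.1 ^ 2 + p.1 * p.2 + p.2 ^ 2)) / τ +
          2 * p.1 * ((2 * y₁ + y₂) / (Real.pi * τ)) +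
          2 * p.2 * ((y₁ + 2 * y₂) / (Real.pi * τ)))) := by
    rw [G, ← intPairEquivSumZero.tsum_eq]
    push_cast
    rw [one_mul]
    congr 1
    refine tsum_congr fun p => ?_
    rw [← Complex.exp_add]
    congr 1
    simp only [coe_intPairEquivSumZero, Fin.sum_univ_three, Matrix.cons_val]
    push_cast
    field_simp
    ring
  have hc : 3 * (-Complex.I * τ / (√3 : ℂ)) = -(√3 : ℂ) * Complex.I * τ := by
    rw [h3]
    field_simp
  rw [hG, tsum_cexp_hexagonal hτ, ← mul_assoc, hc,
    tsum_eq_add_add_of_summable (summable_cexp_hexagonal hτ _ _), mul_assoc _ (Complex.exp _)]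
  congr 1
  simp only [mul_add (Complex.exp (2 * Complex.I * (_ + _ + _) / _)), ← tsum_mul_left,
    ← Complex.exp_add]
  congr 1
  · congr 1
    all_goals
      refine tsum_congr fun r => ?_
      congr 1
      push_cast
      field_simp
      ring
  · refine tsum_congr fun r => ?_
    congr 1
    push_cast
    field_simp
    ring
end
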